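/- For all natural numbers ℓ, m ≥ 1 with n = ℓm, and every k with 1 ≤ k ≤ n/2, one has (in ℤ) p_k(ℓ,m) − p_{k−1}(ℓ,m) ≤ binom(n,k) − binom(n,k−1). -/

import Mathlib

/-- `rectPartitions k l m` is the number of integer partitions of `k` fitting in an
`l × m` rectangle: at most `l` parts, each part at most `m`. -/
noncomputable def rectPartitions (k l m : ℕ) : ℕ :=
  Nat.card {π : Nat.Partition k // Multiset.card π.parts ≤ l ∧ ∀ i ∈ π.parts, i ≤ m}

/-!
Let `D` be the down operator on functions on the subsets of an `n`-element set, and `U` its adjoint,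
the up operator. On functions on the `j`-subsets one has `D U = U D + (n - 2j)`, which is positive
definite when `2j < n`, so `D` maps the functions on the `(j + 1)`-subsets onto those on the
`j`-subsets. If a group `G` acts on the underlying set, then `D` is equivariant and induces a
surjection between the quotients by the `G`-invariant functions, whose dimensions are the binomial
coefficients minus the numbers of orbits. For the wreath product of symmetric groups acting on an
`ℓ × m` grid, the orbits on `j`-subsets are classified by the nonzero row sizes, that is, by the
partitions of `j` that fit in an `ℓ × m` rectangle.
-/

open Finset MulAction
open scoped Pointwise

section InvariantFunctions

theorem finrank_add_finrank_le_of_surjective {K V W : Type*} [DivisionRing K]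
    [AddCommGroup V] [Module K V] [FiniteDimensional K V]
    [AddCommGroup W] [Module K W] [FiniteDimensional K W]
    {f : V →ₗ[K] W} (hf : Function.Surjective f) {V' : Submodule K V} {W' : Submodule K W}
    (h : V' ≤ W'.comap f) :
    Module.finrank K V' + Module.finrank K W ≤ Module.finrank K W' + Module.finrank K V := by
  have hquot : Function.Surjective (V'.mapQ W' f h) := by
    rw [← LinearMap.range_eq_top, Submodule.range_mapQ, LinearMap.range_eq_top.2 hf,
      Submodule.map_top, Submodule.range_mkQ]
  have hle := LinearMap.finrank_le_finrank_of_surjective hquot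
  rw [← V'.finrank_quotient_add_finrank, ← W'.finrank_quotient_add_finrank]
  omega

/-- The functions `X → R` that are constant on the orbits of `G`. -/
def invariantFunctions (R G X : Type*) [Semiring R] [Group G] [MulAction G X] :
    Submodule R (X → R) where
  carrier := {f | ∀ (g : G) (x : X), f (g • x) = f x}
  add_mem' hf hf' g x := by simp only [Pi.add_apply, hf g x, hf' g x]
  zero_mem' _ _ := rfl
  smul_mem' c f hf g x := by simp only [Pi.smul_apply, hf g x]

theorem range_funLeft_orbitRel_mk (R G X : Type*) [Semiring R] [Group G] [MulAction G X] :
    LinearMap.range (LinearMap.funLeft R R (Quotient.mk (orbitRel G X))) =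
      invariantFunctions R G X := by
  ext f
  constructor
  · rintro ⟨h, rfl⟩ g x
    exact congrArg h (Quotient.sound ⟨g, rfl⟩)
  · intro hf
    refine ⟨Quotient.lift f ?_, rfl⟩
    rintro _ x ⟨g, rfl⟩
    exact hf g x

theorem finrank_invariantFunctions (R G X : Type*) [Semiring R] [StrongRankCondition R]
    [Group G] [MulAction G X] [Finite X] :
    Module.finrank R (invariantFunctions R G X) = Nat.card (orbitRel.Quotient G X) := by
  have := Fintype.ofFinite (orbitRel.Quotient G X)
  rw [← range_funLeft_orbitRel_mk, LinearMap.finrank_range_of_inj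
    (LinearMap.funLeft_injective_of_surjective R R _ Quotient.mk_surjective)]
  exact (Module.finrank_fintype_fun_eq_card R).trans Nat.card_eq_fintype_card.symm

end InvariantFunctions

section BooleanLattice

variable {R α : Type*} [DecidableEq α]

section Semiring

variable [Semiring R]

variable (R α) in
/-- The up operator on functions on the Boolean lattice: sum over the sets covered by the
argument. -/
def upOp : (Finset α → R) →ₗ[R] (Finset α → R) where
  toFun f A := ∑ a ∈ A, f (A.erase a)
  map_add' _ _ := funext fun _ ↦ sum_add_distrib
  map_smul' _ _ := funext fun _ ↦ (mul_sum ..).symm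

theorem upOp_apply (f : Finset α → R) (A : Finset α) : upOp R α f A = ∑ a ∈ A, f (A.erase a) :=
  rfl

variable [Fintype α]

variable (R α) in
/-- The down operator on functions on the Boolean lattice: sum over the sets covering the
argument. -/
def downOp : (Finset α → R) →ₗ[R] (Finset α → R) where
  toFun f B := ∑ a ∈ Bᶜ, f (insert a B)
  map_add' _ _ := funext fun _ ↦ sum_add_distrib
  map_smul' _ _ := funext fun _ ↦ (mul_sum ..).symm

theorem downOp_apply (f : Finset α → R) (B : Finset α) :
    downOp R α f B = ∑ a ∈ Bᶜ, f (insert a B) :=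
  rfl

theorem upOp_dotProduct (f g : Finset α → R) :
    upOp R α f ⬝ᵥ g = f ⬝ᵥ downOp R α g := by
  simp only [dotProduct, upOp_apply, downOp_apply, sum_mul, mul_sum, sum_sigma']
  refine sum_nbij' (fun p ↦ ⟨p.1.erase p.2, p.2⟩) (fun p ↦ ⟨insert p.2 p.1, p.2⟩) ?_ ?_ ?_ ?_ ?_ <;>
    rintro ⟨A, a⟩ ha <;> simp_all

theorem downOp_mem_invariantFunctions {G : Type*} [Group G] [MulAction G α] {f : Finset α → R}
    (hf : f ∈ invariantFunctions R G (Finset α)) :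
    downOp R α f ∈ invariantFunctions R G (Finset α) := by
  intro g B
  rw [downOp_apply, downOp_apply]
  refine (sum_equiv (MulAction.toPerm g) (fun a ↦ ?_) fun a _ ↦ ?_).symm
  · simp only [mem_compl, toPerm_apply, smul_mem_smul_finset_iff]
  · rw [toPerm_apply, ← smul_finset_insert, hf]

end Semiring

section CommRing

variable [CommRing R] [Fintype α]

theorem downOp_upOp (f : Finset α → R) (B : Finset α) :
    downOp R α (upOp R α f) B =
      upOp R α (downOp R α f) B + ((Fintype.card α : R) - 2 * #B) * f B := by
  have hdown : downOp R α (upOp R α f) B =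
      #Bᶜ * f B + ∑ a ∈ Bᶜ, ∑ b ∈ B, f (insert a (B.erase b)) := by
    rw [downOp_apply, ← nsmul_eq_mul, ← sum_const, ← sum_add_distrib]
    refine sum_congr rfl fun a ha ↦ ?_
    rw [mem_compl] at ha
    rw [upOp_apply, sum_insert ha, erase_insert ha]
    congr 1
    refine sum_congr rfl fun b hb ↦ ?_
    rw [erase_insert_of_ne (ne_of_mem_of_not_mem hb ha).symm]
  have hup : upOp R α (downOp R α f) B =
      #B * f B + ∑ b ∈ B, ∑ a ∈ Bᶜ, f (insert a (B.erase b)) := by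
    rw [upOp_apply, ← nsmul_eq_mul, ← sum_const, ← sum_add_distrib]
    refine sum_congr rfl fun b hb ↦ ?_
    rw [downOp_apply, compl_erase, sum_insert (notMem_compl.2 hb), insert_erase hb]
  have hcard : (#Bᶜ : R) = Fintype.card α - #B := by
    rw [card_compl, Nat.cast_sub (card_le_univ B)]
  rw [hdown, hup, hcard, sum_comm]
  ring

theorem upOp_dotProduct_upOp (f : Finset α → R) :
    upOp R α f ⬝ᵥ upOp R α f =
      downOp R α f ⬝ᵥ downOp R α f + ∑ B, ((Fintype.card α : R) - 2 * #B) * f B ^ 2 := by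
  have hcomm : downOp R α (upOp R α f) =
      upOp R α (downOp R α f) + fun B ↦ ((Fintype.card α : R) - 2 * #B) * f B :=
    funext (downOp_upOp f)
  rw [upOp_dotProduct, hcomm, dotProduct_add, dotProduct_comm f, upOp_dotProduct]
  congr 1
  exact sum_congr rfl fun B _ ↦ by ring

theorem eq_zero_of_dotProduct_downOp_upOp_eq_zero [LinearOrder R] [IsStrictOrderedRing R]
    {f : Finset α → R} (hf : ∀ B, f B ≠ 0 → 2 * #B < Fintype.card α)
    (h : f ⬝ᵥ downOp R α (upOp R α f) = 0) : f = 0 := by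
  have hweight (B : Finset α) (hB : f B ≠ 0) : (0 : R) < Fintype.card α - 2 * #B :=
    sub_pos.2 (by exact_mod_cast hf B hB)
  have hterm (B : Finset α) : 0 ≤ ((Fintype.card α : R) - 2 * #B) * f B ^ 2 := by
    rcases eq_or_ne (f B) 0 with hB | hB
    · simp [hB]
    · exact mul_nonneg (hweight B hB).le (sq_nonneg _)
  have hdown : 0 ≤ downOp R α f ⬝ᵥ downOp R α f := sum_nonneg fun _ _ ↦ mul_self_nonneg _
  rw [← upOp_dotProduct, upOp_dotProduct_upOp] at h
  have hsum := ((add_eq_zero_iff_of_nonneg hdown (sum_nonneg fun B _ ↦ hterm B)).1 h).2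
  ext B
  by_contra hB
  have hB' := (sum_eq_zero_iff_of_nonneg fun B _ ↦ hterm B).1 hsum B (mem_univ B)
  exact (mul_pos (hweight B hB) (sq_pos_of_ne_zero hB)).ne' hB'

end CommRing

end BooleanLattice

section Layer

variable (K : Type*) {α : Type*}

section Semiring

variable [Semiring K]

/-- Extension by zero of a function on the `j`-subsets of `α` to the whole Boolean lattice. -/
noncomputable def extendLayer (α : Type*) (j : ℕ) :
    (Set.powersetCard α j → K) →ₗ[K] (Finset α → K) :=
  Function.ExtendByZero.linearMap K Subtype.val

variable {K}

theorem extendLayer_coe {j : ℕ} (f : Set.powersetCard α j → K) (A : Set.powersetCard α j) :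
    extendLayer K α j f A = f A :=
  Subtype.val_injective.extend_apply f 0 A

theorem extendLayer_of_card_ne {j : ℕ} (f : Set.powersetCard α j → K) {A : Finset α}
    (hA : #A ≠ j) : extendLayer K α j f A = 0 :=
  Function.extend_apply' _ _ _ fun ⟨B, hB⟩ ↦ hA (hB ▸ B.2)

variable [DecidableEq α]

theorem extendLayer_mem_invariantFunctions {G : Type*} [Group G] [MulAction G α] {j : ℕ}
    {f : Set.powersetCard α j → K} (hf : f ∈ invariantFunctions K G (Set.powersetCard α j)) :
    extendLayer K α j f ∈ invariantFunctions K G (Finset α) := by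
  intro g A
  by_cases hA : #A = j
  · lift A to Set.powersetCard α j using hA
    rw [← Set.powersetCard.coe_smul, extendLayer_coe, extendLayer_coe, hf]
  · rw [extendLayer_of_card_ne f hA, extendLayer_of_card_ne f (by rwa [card_smul_finset])]

variable [Fintype α]

variable (K α) in
/-- The down operator from functions on `(j + 1)`-subsets to functions on `j`-subsets. -/
noncomputable def layerDown (j : ℕ) :
    (Set.powersetCard α (j + 1) → K) →ₗ[K] (Set.powersetCard α j → K) :=
  LinearMap.funLeft K K Subtype.val ∘ₗ downOp K α ∘ₗ extendLayer K α (j + 1)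

theorem layerDown_mem_invariantFunctions {G : Type*} [Group G] [MulAction G α] {j : ℕ}
    {f : Set.powersetCard α (j + 1) → K}
    (hf : f ∈ invariantFunctions K G (Set.powersetCard α (j + 1))) :
    layerDown K α j f ∈ invariantFunctions K G (Set.powersetCard α j) :=
  fun g B ↦ downOp_mem_invariantFunctions (extendLayer_mem_invariantFunctions hf) g B

theorem layerDown_restrict {j : ℕ} (f : Finset α → K) (B : Set.powersetCard α j) :
    layerDown K α j (fun A ↦ f A) B = downOp K α f B := by
  refine sum_congr rfl fun a ha ↦ ?_
  have hcard : #(insert a (B : Finset α)) = j + 1 := by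
    rw [card_insert_of_notMem (mem_compl.1 ha), Set.powersetCard.card_eq B]
  exact extendLayer_coe (fun A ↦ f A) ⟨_, hcard⟩

end Semiring

theorem layerDown_surjective [Field K] [LinearOrder K] [IsStrictOrderedRing K]
    [DecidableEq α] [Fintype α] {j : ℕ} (hj : 2 * j < Fintype.card α) :
    Function.Surjective (layerDown K α j) := by
  let downUp : (Set.powersetCard α j → K) →ₗ[K] (Set.powersetCard α j → K) :=
    LinearMap.funLeft K K Subtype.val ∘ₗ downOp K α ∘ₗ upOp K α ∘ₗ extendLayer K α j
  have hinj : Function.Injective downUp := by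
    refine (injective_iff_map_eq_zero downUp).2 fun f hf ↦ ?_
    have hcard (B : Finset α) (hB : extendLayer K α j f B ≠ 0) : #B = j :=
      not_imp_comm.1 (extendLayer_of_card_ne f) hB
    have hext : extendLayer K α j f = 0 := by
      refine eq_zero_of_dotProduct_downOp_upOp_eq_zero (fun B hB ↦ hcard B hB ▸ hj) ?_
      refine sum_eq_zero fun B _ ↦ mul_eq_zero.2 (or_iff_not_imp_left.2 fun hB ↦ ?_)
      exact congrFun hf ⟨B, hcard B hB⟩
    ext B
    rw [← extendLayer_coe f B, hext, Pi.zero_apply, Pi.zero_apply]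
  intro g
  obtain ⟨f, hf⟩ := LinearMap.injective_iff_surjective.1 hinj g
  exact ⟨fun A ↦ upOp K α (extendLayer K α j f) A,
    funext fun B ↦ (layerDown_restrict _ B).trans (congrFun hf B)⟩

end Layer

theorem card_orbits_add_choose_le (G : Type*) {α : Type*} [Group G] [Fintype α] [DecidableEq α]
    [MulAction G α] {j : ℕ} (hj : 2 * j < Fintype.card α) :
    Nat.card (orbitRel.Quotient G (Set.powersetCard α (j + 1))) + (Fintype.card α).choose j ≤
      Nat.card (orbitRel.Quotient G (Set.powersetCard α j)) +
        (Fintype.card α).choose (j + 1) := by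
  have hlayer (i : ℕ) :
      Module.finrank ℚ (Set.powersetCard α i → ℚ) = (Fintype.card α).choose i := by
    rw [Module.finrank_fintype_fun_eq_card, ← Nat.card_eq_fintype_card, Set.powersetCard.card,
      Nat.card_eq_fintype_card]
  rw [← finrank_invariantFunctions ℚ, ← finrank_invariantFunctions ℚ, ← hlayer, ← hlayer]
  exact finrank_add_finrank_le_of_surjective (layerDown_surjective ℚ hj)
    fun f hf ↦ layerDown_mem_invariantFunctions hf

section RowSizes

theorem exists_perm_of_map_univ_eq {ι β : Type*} [Fintype ι] {f g : ι → β}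
    (h : (univ : Finset ι).val.map f = (univ : Finset ι).val.map g) :
    ∃ σ : Equiv.Perm ι, ∀ i, g (σ i) = f i := by
  classical
  have hfiber (b : β) : Nonempty ({i // f i = b} ≃ {i // g i = b}) := by
    rw [← Fintype.card_eq, Fintype.card_subtype, Fintype.card_subtype]
    simpa only [Multiset.count_map, card_def, filter_val, eq_comm] using
      congrArg (Multiset.count b) h
  exact ⟨Equiv.ofFiberEquiv fun b ↦ (hfiber b).some, Equiv.ofFiberEquiv_map _⟩

theorem exists_map_univ_eq {ι β : Type*} [Fintype ι] {s : Multiset β}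
    (hs : s.card = Fintype.card ι) : ∃ f : ι → β, (univ : Finset ι).val.map f = s := by
  induction s using Quotient.inductionOn with | h l
  have e : ι ≃ Fin l.length := Fintype.equivFinOfCardEq hs.symm
  refine ⟨l.get ∘ e, ?_⟩
  rw [← Multiset.map_map, Multiset.map_univ_val_equiv, Fin.univ_val_map, List.ofFn_get]
  rfl

theorem filter_ne_zero_add_replicate {M : Type*} [Zero M] [DecidableEq M] (s : Multiset M) :
    s.filter (· ≠ 0) + Multiset.replicate (s.card - (s.filter (· ≠ 0)).card) 0 = s := by
  have hsplit := Multiset.filter_add_not (· ≠ 0) s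
  have hzero : s.filter (¬ · ≠ 0) = Multiset.replicate (s.filter (¬ · ≠ 0)).card 0 :=
    Multiset.eq_replicate_card.2 fun x hx ↦ not_not.1 (Multiset.mem_filter.1 hx).2
  have hcard := congrArg Multiset.card hsplit
  rw [Multiset.card_add] at hcard
  rwa [← hcard, Nat.add_sub_cancel_left, ← hzero]

/-- The wreath product of `Equiv.Perm κ` and `Equiv.Perm ι` in its imprimitive action: the
permutations of the grid `ι × κ` that permute its rows `{i} × κ`. -/
def rowPerms (ι κ : Type*) : Subgroup (Equiv.Perm (ι × κ)) where
  carrier := {e | ∃ σ : Equiv.Perm ι, ∀ p, (e p).1 = σ p.1}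
  one_mem' := ⟨1, fun _ ↦ rfl⟩
  mul_mem' := by
    rintro e e' ⟨σ, hσ⟩ ⟨σ', hσ'⟩
    exact ⟨σ * σ', fun p ↦ by simp only [Equiv.Perm.mul_apply, hσ, hσ']⟩
  inv_mem' := by
    rintro e ⟨σ, hσ⟩
    refine ⟨σ⁻¹, fun p ↦ ?_⟩
    rw [Equiv.Perm.eq_inv_iff_eq, ← hσ, ← Equiv.Perm.mul_apply, mul_inv_cancel,
      Equiv.Perm.one_apply]

variable {ι κ : Type*} [DecidableEq ι] [DecidableEq κ] [Fintype κ]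

/-- The `i`-th row of a subset of the grid `ι × κ`. -/
def row (A : Finset (ι × κ)) (i : ι) : Finset κ :=
  {x | (i, x) ∈ A}

theorem mem_row {A : Finset (ι × κ)} {i : ι} {x : κ} : x ∈ row A i ↔ (i, x) ∈ A :=
  mem_filter_univ x

variable [Fintype ι]

theorem sum_card_row (A : Finset (ι × κ)) : ∑ i, #(row A i) = #A := by
  simp only [row, card_filter]
  rw [← Fintype.sum_prod_type' fun i x ↦ if (i, x) ∈ A then 1 else 0, ← card_filter,
    filter_univ_mem]

/-- The multiset of the sizes of the rows of `A`, including those of the empty rows. -/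
def rowSizes (A : Finset (ι × κ)) : Multiset ℕ :=
  (univ : Finset ι).val.map fun i ↦ #(row A i)

theorem card_rowSizes (A : Finset (ι × κ)) : (rowSizes A).card = Fintype.card ι :=
  Multiset.card_map _ _

theorem sum_rowSizes (A : Finset (ι × κ)) : (rowSizes A).sum = #A :=
  sum_card_row A

theorem le_card_of_mem_rowSizes {A : Finset (ι × κ)} {r : ℕ} (hr : r ∈ rowSizes A) :
    r ≤ Fintype.card κ := by
  obtain ⟨i, -, rfl⟩ := Multiset.mem_map.1 hr
  exact card_le_univ _

theorem exists_rowSizes_eq {s : Multiset ℕ} (hcard : s.card = Fintype.card ι)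
    (hle : ∀ r ∈ s, r ≤ Fintype.card κ) : ∃ A : Finset (ι × κ), rowSizes A = s := by
  obtain ⟨r, rfl⟩ := exists_map_univ_eq hcard
  have hrow (i : ι) : ∃ S : Finset κ, #S = r i := by
    obtain ⟨S, -, hS⟩ := exists_subset_card_eq (s := (univ : Finset κ)) (n := r i)
      (hle _ (Multiset.mem_map_of_mem r (mem_univ_val i)))
    exact ⟨S, hS⟩
  choose S hS using hrow
  refine ⟨({p | p.2 ∈ S p.1} : Finset (ι × κ)), Multiset.map_congr rfl fun i _ ↦ ?_⟩
  rw [← hS i]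
  congr 1
  ext x
  rw [mem_row, mem_filter_univ]

theorem rowSizes_smul (e : rowPerms ι κ) (A : Finset (ι × κ)) :
    rowSizes (e • A) = rowSizes A := by
  obtain ⟨e, σ, hσ⟩ := e
  have hrow (i : ι) : row (e • A) (σ i) = (row A i).image fun x ↦ (e (i, x)).2 := by
    ext y
    simp only [mem_row, mem_image, mem_smul_finset, Equiv.Perm.smul_def, Prod.exists, Prod.ext_iff,
      hσ, σ.injective.eq_iff]
    aesop
  have hinj (i : ι) : Function.Injective fun x ↦ (e (i, x)).2 := fun x y hxy ↦
    (Prod.ext_iff.1 (e.injective (Prod.ext ((hσ (i, x)).trans (hσ (i, y)).symm) hxy))).2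
  change rowSizes (e • A) = rowSizes A
  rw [rowSizes, ← Multiset.map_univ_val_equiv σ, Multiset.map_map]
  refine Multiset.map_congr rfl fun i _ ↦ ?_
  rw [Function.comp_apply, hrow, card_image_of_injective _ (hinj i)]

theorem exists_smul_eq_of_rowSizes_eq {A B : Finset (ι × κ)} (h : rowSizes A = rowSizes B) :
    ∃ e : rowPerms ι κ, e • A = B := by
  obtain ⟨σ, hσ⟩ := exists_perm_of_map_univ_eq h
  have hrow (i : ι) : ∃ τ : Equiv.Perm κ, τ • row A i = row B (σ i) := by
    have := Set.powersetCard.isPretransitive (α := κ) (n := #(row A i))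
    obtain ⟨τ, hτ⟩ := exists_smul_eq (Equiv.Perm κ)
      (⟨row A i, rfl⟩ : Set.powersetCard κ #(row A i)) ⟨row B (σ i), hσ i⟩
    exact ⟨τ, congrArg Subtype.val hτ⟩
  choose τ hτ using hrow
  refine ⟨⟨Equiv.prodShear σ τ, σ, fun _ ↦ rfl⟩, ?_⟩
  refine eq_of_subset_of_card_le ?_ ?_
  · intro p hp
    obtain ⟨⟨i, x⟩, hx, rfl⟩ := mem_smul_finset.1 hp
    exact mem_row.1 (hτ i ▸ smul_mem_smul_finset (mem_row.2 hx))
  · rw [card_smul_finset, ← sum_rowSizes, ← sum_rowSizes, h]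

end RowSizes

section RowPartition

variable {ι κ : Type*} [Fintype ι] [DecidableEq ι] [Fintype κ] [DecidableEq κ] {j : ℕ}

/-- The partition of `j` whose parts are the nonzero row sizes of a `j`-subset of `ι × κ`. -/
def rowPartition (A : Set.powersetCard (ι × κ) j) : Nat.Partition j :=
  .ofSums j (rowSizes A.1) ((sum_rowSizes A.1).trans A.2)

theorem parts_rowPartition (A : Set.powersetCard (ι × κ) j) :
    (rowPartition A).parts = (rowSizes A.1).filter (· ≠ 0) :=
  rfl

theorem rowPartition_eq_iff {A B : Set.powersetCard (ι × κ) j} :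
    rowPartition A = rowPartition B ↔ rowSizes A.1 = rowSizes B.1 := by
  rw [Nat.Partition.ext_iff, parts_rowPartition, parts_rowPartition]
  refine ⟨fun h ↦ ?_, fun h ↦ by rw [h]⟩
  rw [← filter_ne_zero_add_replicate (rowSizes A.1), h, card_rowSizes,
    ← card_rowSizes B.1, filter_ne_zero_add_replicate]

theorem orbitRel_rowPerms :
    orbitRel (rowPerms ι κ) (Set.powersetCard (ι × κ) j) = Setoid.ker rowPartition := by
  ext A B
  rw [orbitRel_apply, Setoid.ker_def, rowPartition_eq_iff]
  constructor
  · rintro ⟨e, rfl⟩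
    exact rowSizes_smul e B.1
  · intro h
    obtain ⟨e, he⟩ := exists_smul_eq_of_rowSizes_eq h.symm
    exact ⟨e, Subtype.ext he⟩

theorem range_rowPartition :
    Set.range (rowPartition : Set.powersetCard (ι × κ) j → Nat.Partition j) =
      {π | π.parts.card ≤ Fintype.card ι ∧ ∀ i ∈ π.parts, i ≤ Fintype.card κ} := by
  ext π
  constructor
  · rintro ⟨A, rfl⟩
    refine ⟨?_, fun i hi ↦ le_card_of_mem_rowSizes (Multiset.mem_of_mem_filter hi)⟩
    exact (Multiset.card_le_card (Multiset.filter_le _ _)).trans_eq (card_rowSizes A.1)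
  · rintro ⟨hcard, hle⟩
    obtain ⟨A, hA⟩ := exists_rowSizes_eq (ι := ι) (κ := κ)
      (s := π.parts + Multiset.replicate (Fintype.card ι - π.parts.card) 0)
      (by rw [Multiset.card_add, Multiset.card_replicate, Nat.add_sub_cancel' hcard])
      (fun r hr ↦ (Multiset.mem_add.1 hr).elim (hle r) fun h ↦
        (Multiset.eq_of_mem_replicate h).trans_le (Nat.zero_le _))
    have hAj : #A = j := by
      rw [← sum_rowSizes, hA, Multiset.sum_add, Multiset.sum_replicate, smul_zero, add_zero,
        π.parts_sum]
    refine ⟨⟨A, hAj⟩, Nat.Partition.ext ?_⟩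
    rw [parts_rowPartition, hA, Multiset.filter_add,
      Multiset.filter_eq_self.2 fun i hi ↦ (π.parts_pos hi).ne',
      Multiset.filter_eq_nil.2 fun i hi ↦ not_not.2 (Multiset.eq_of_mem_replicate hi), add_zero]

theorem card_orbits_rowPerms (ι κ : Type*) [Fintype ι] [DecidableEq ι] [Fintype κ] [DecidableEq κ]
    (j : ℕ) :
    Nat.card (orbitRel.Quotient (rowPerms ι κ) (Set.powersetCard (ι × κ) j)) =
      rectPartitions j (Fintype.card ι) (Fintype.card κ) := by
  rw [orbitRel.Quotient, orbitRel_rowPerms, Nat.card_congr (Setoid.quotientKerEquivRange _),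
    range_rowPartition]
  rfl

end RowPartition

/-- For `ℓ, m ≥ 1` with `n = ℓm` and `1 ≤ k` with `2k ≤ n`, one has
`p_k(ℓ,m) − p_{k−1}(ℓ,m) ≤ binom(n,k) − binom(n,k−1)`. -/
theorem qbinomial_diff_upper_bound (ℓ m n k : ℕ) (hl : 1 ≤ ℓ) (hm : 1 ≤ m)
    (hn : n = ℓ * m) (hk : 1 ≤ k) (hk2 : 2 * k ≤ n) :
    (rectPartitions k ℓ m : ℤ) - (rectPartitions (k - 1) ℓ m : ℤ) ≤
      (Nat.choose n k : ℤ) - (Nat.choose n (k - 1) : ℤ) := by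
  have hgrid : Fintype.card (Fin ℓ × Fin m) = n := by
    rw [Fintype.card_prod, Fintype.card_fin, Fintype.card_fin, hn]
  have horbits (j : ℕ) : rectPartitions j ℓ m =
      Nat.card (orbitRel.Quotient (rowPerms (Fin ℓ) (Fin m))
        (Set.powersetCard (Fin ℓ × Fin m) j)) := by
    rw [card_orbits_rowPerms, Fintype.card_fin, Fintype.card_fin]
  have hle : rectPartitions (k - 1 + 1) ℓ m + n.choose (k - 1) ≤
      rectPartitions (k - 1) ℓ m + n.choose (k - 1 + 1) := by
    rw [horbits, horbits, ← hgrid]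
    exact card_orbits_add_choose_le (rowPerms (Fin ℓ) (Fin m)) (by omega)
  rw [Nat.sub_add_cancel hk] at hle
  omega
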